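/- Let h : ℝ^L → ℝ^L be continuous and suppose there is R > 0 such that ⟨h(v), v⟩ ≥ 0 for all v with ‖v‖ = R. Then there exists v̄ with ‖v̄‖ ≤ R and h(v̄) = 0. -/

import Mathlib

open RealInnerProductSpace

namespace BrouwerAux

open MeasureTheory Set Metric Topology

/-- Interpolation identity for the determinant. -/
lemma det_interp {n : ℕ} (s : Finset ℝ) (hs : n < s.card)
    (A : EuclideanSpace ℝ (Fin n) →L[ℝ] EuclideanSpace ℝ (Fin n)) (u : ℝ) :
    (ContinuousLinearMap.id ℝ _ + u • A).det =
      ∑ t ∈ s, (Lagrange.basis s id t).eval u * (ContinuousLinearMap.id ℝ _ + t • A).det := by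
  classical
  let b := (EuclideanSpace.basisFun (Fin n) ℝ).toBasis
  let M : Matrix (Fin n) (Fin n) ℝ := LinearMap.toMatrix b b (A : _ →ₗ[ℝ] _)
  let p : Polynomial ℝ := Matrix.det ((Polynomial.X : Polynomial ℝ) • M.map Polynomial.C +
    (1 : Matrix (Fin n) (Fin n) ℝ).map Polynomial.C)
  have hp : ∀ t : ℝ, p.eval t = (ContinuousLinearMap.id ℝ _ + t • A).det := by
    intro t
    have h1 : (ContinuousLinearMap.id ℝ _ + t • A).det = (1 + t • M).det := by
      rw [ContinuousLinearMap.det, ← LinearMap.det_toMatrix b]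
      congr 1
      simp [M]
    rw [h1, ← Polynomial.coe_evalRingHom, RingHom.map_det]
    congr 1
    ext i j
    by_cases hij : i = j <;> simp [hij, add_comm] <;> ring
  have hdeg : p.degree < s.card := by
    refine lt_of_le_of_lt Polynomial.degree_le_natDegree ?_
    have := Polynomial.natDegree_det_X_add_C_le M 1
    simp only [Fintype.card_fin] at this
    exact_mod_cast lt_of_le_of_lt this hs
  have h2 := Lagrange.eq_interpolate (s := s) (v := id) (f := p) (fun _ _ _ _ h => h) hdeg
  rw [← hp u, h2]
  simp only [Lagrange.interpolate_apply, Polynomial.eval_finsetSum, Polynomial.eval_mul,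
    Polynomial.eval_C, ← hp, id]
  refine Finset.sum_congr rfl fun t _ => mul_comm _ _

lemma det_pos {n : ℕ} (A : EuclideanSpace ℝ (Fin n) →L[ℝ] EuclideanSpace ℝ (Fin n))
    (K t : ℝ) (hA : ‖A‖ ≤ K) (ht : 0 ≤ t) (htK : t * K < 1) :
    0 < (ContinuousLinearMap.id ℝ (EuclideanSpace ℝ (Fin n)) + t • A).det := by
  have hne : ∀ s ∈ Icc 0 t, (ContinuousLinearMap.id ℝ (EuclideanSpace ℝ (Fin n)) + s • A).det ≠ 0 := by
    intro s hs h0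
    have hinj : Function.Injective (ContinuousLinearMap.id ℝ (EuclideanSpace ℝ (Fin n)) + s • A) := by
      rw [injective_iff_map_eq_zero]
      intro x hx
      have hx' : x = -(s • A x) := by
        have : x + s • A x = 0 := by simpa using hx
        exact eq_neg_of_add_eq_zero_left this
      by_contra hx0
      have hpos : 0 < ‖x‖ := norm_pos_iff.2 hx0
      have h1 : ‖x‖ ≤ s * (K * ‖x‖) := by
        calc ‖x‖ = ‖-(s • A x)‖ := by rw [← hx']
          _ = s * ‖A x‖ := by rw [norm_neg, norm_smul, Real.norm_of_nonneg hs.1]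
          _ ≤ s * (K * ‖x‖) := by
            gcongr
            · exact hs.1
            · exact A.le_of_opNorm_le hA x
      have hK : 0 ≤ K := (norm_nonneg _).trans hA
      have h2 : s * K ≤ t * K := by gcongr; exact hs.2
      nlinarith
    have := LinearMap.ker_eq_bot_of_injective
      (f := ((ContinuousLinearMap.id ℝ (EuclideanSpace ℝ (Fin n)) + s • A : EuclideanSpace ℝ (Fin n) →L[ℝ] EuclideanSpace ℝ (Fin n)) :
        EuclideanSpace ℝ (Fin n) →ₗ[ℝ] EuclideanSpace ℝ (Fin n))) hinj
    have h3 := LinearMap.bot_lt_ker_of_det_eq_zero h0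
    exact h3.ne' this
  by_contra hcon
  push Not at hcon
  have hc : ContinuousOn (fun s : ℝ => (ContinuousLinearMap.id ℝ (EuclideanSpace ℝ (Fin n)) + s • A).det) (Icc 0 t) := by
    apply Continuous.continuousOn
    apply ContinuousLinearMap.continuous_det.comp
    fun_prop
  have := intermediate_value_Icc' ht hc
  have h0 : (0:ℝ) ∈ Icc ((ContinuousLinearMap.id ℝ (EuclideanSpace ℝ (Fin n)) + t • A).det)
      ((ContinuousLinearMap.id ℝ (EuclideanSpace ℝ (Fin n)) + (0:ℝ) • A).det) := by
    refine ⟨hcon, ?_⟩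
    simp [ContinuousLinearMap.det]
  obtain ⟨s, hs, hs0⟩ := this h0
  exact hne s hs hs0

/-- Extension by zero of a Lipschitz map vanishing on the sphere. -/
lemma lip_ext {E : Type*} [NormedAddCommGroup E] [NormedSpace ℝ E] (ρ : ℝ) (g : E → E)
    (K : NNReal) (hK : LipschitzOnWith K g (closedBall 0 ρ)) (hg : ∀ x, ρ ≤ ‖x‖ → g x = 0) :
    LipschitzWith K g := by
  have key : ∀ x y, ‖x‖ ≤ ρ → ρ ≤ ‖y‖ → ‖g x - g y‖ ≤ K * ‖x - y‖ := by
    intro x y hx hy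
    have hc : ContinuousOn (fun s : ℝ => ‖x + s • (y - x)‖) (Icc 0 1) := by fun_prop
    obtain ⟨s, hs, hs'⟩ := intermediate_value_Icc zero_le_one hc
      (show ρ ∈ Icc _ _ by simpa using ⟨hx, hy⟩)
    simp only at hs'
    set z := x + s • (y - x)
    have h1 : ‖g x - g z‖ ≤ K * ‖x - z‖ := hK.norm_sub_le (by simpa using hx) (by simp [hs'])
    rw [hg z hs'.ge] at h1
    rw [hg y hy]
    refine h1.trans ?_
    gcongr
    have : x - z = s • (x - y) := by simp only [z]; module
    rw [this, norm_smul, Real.norm_of_nonneg hs.1]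
    exact mul_le_of_le_one_left (norm_nonneg _) hs.2
  refine LipschitzWith.of_dist_le_mul fun x y => ?_
  rw [dist_eq_norm, dist_eq_norm]
  rcases le_total ‖x‖ ρ with hx | hx <;> rcases le_total ‖y‖ ρ with hy | hy
  · exact hK.norm_sub_le (by simpa using hx) (by simpa using hy)
  · exact key x y hx hy
  · rw [norm_sub_rev, norm_sub_rev x]; exact key y x hy hx
  · rw [hg x hx, hg y hy]; simp; positivity

lemma bij {E : Type*} [NormedAddCommGroup E] [NormedSpace ℝ E] [CompleteSpace E] (g : E → E)
    (K : NNReal) (hK : LipschitzWith K g) (t : ℝ) (ht : 0 ≤ t) (htK : t * K < 1) :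
    Function.Bijective (fun x => x + t • g x) := by
  have hl : ∀ x y, ‖t • g x - t • g y‖ ≤ (t * K) * ‖x - y‖ := by
    intro x y
    rw [← smul_sub, norm_smul, Real.norm_of_nonneg ht, mul_assoc]
    gcongr
    exact hK.norm_sub_le x y
  constructor
  · intro x y hxy
    simp only at hxy
    by_contra hne
    have hpos : 0 < ‖x - y‖ := norm_pos_iff.2 (sub_ne_zero.2 hne)
    have h1 : x - y = -(t • g x - t • g y) := by
      rw [neg_sub, sub_eq_sub_iff_add_eq_add, hxy, add_comm]
    have h2 := hl x y
    rw [← norm_neg, ← h1] at h2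
    nlinarith
  · intro y
    have hc : ContractingWith (⟨t * K, by positivity⟩ : NNReal) (fun x => y - t • g x) := by
      refine ⟨by exact_mod_cast htK, LipschitzWith.of_dist_le_mul fun a b => ?_⟩
      rw [dist_eq_norm, dist_eq_norm, sub_sub_sub_cancel_left, norm_sub_rev]
      exact hl a b
    have : Nonempty E := ⟨0⟩
    have hf := hc.fixedPoint_isFixedPt
    refine ⟨ContractingWith.fixedPoint _ hc, ?_⟩
    have h3 : y - t • g (ContractingWith.fixedPoint _ hc) = ContractingWith.fixedPoint _ hc := hf
    exact (sub_eq_iff_eq_add.1 h3).symm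

/-- No smooth retraction. -/
lemma no_retract {n : ℕ} (ρ : ℝ) (hρ : 0 < ρ)
    (r : EuclideanSpace ℝ (Fin n) → EuclideanSpace ℝ (Fin n)) (hr : ContDiff ℝ 1 r)
    (hn : ∀ x, ‖r x‖ = ρ) (hid : ∀ x, ‖x‖ = ρ → r x = x) : False := by
  classical
  let E := EuclideanSpace ℝ (Fin n)
  let A : E → E →L[ℝ] E := fun x => fderiv ℝ r x - ContinuousLinearMap.id ℝ E
  have hAc : Continuous A := (hr.continuous_fderiv one_ne_zero).sub continuous_const
  have hrd : ∀ x, HasFDerivAt r (fderiv ℝ r x) x := fun x =>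
    (hr.differentiable one_ne_zero x).hasFDerivAt
  let G : E → E := fun x => r x - x
  have hG : ContDiff ℝ 1 G := hr.sub contDiff_id
  have hGd : ∀ x, HasFDerivAt G (A x) x := fun x => (hrd x).sub (hasFDerivAt_id x)
  obtain ⟨K, hK⟩ := hG.contDiffOn.exists_lipschitzOnWith one_ne_zero
    (convex_closedBall (0:E) ρ) (isCompact_closedBall _ _)
  let g : E → E := fun x => if ‖x‖ < ρ then G x else 0
  have hgG : ∀ x ∈ closedBall (0:E) ρ, g x = G x := by
    intro x hx
    have hx' : ‖x‖ ≤ ρ := by simpa using hx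
    by_cases h : ‖x‖ < ρ
    · simp [g, h]
    · have : r x = x := hid x (le_antisymm hx' (not_lt.1 h))
      simp [g, G, h, this]
  have hg0 : ∀ x, ρ ≤ ‖x‖ → g x = 0 := fun x hx => by simp [g, not_lt.2 hx]
  have hgK : LipschitzWith K g := by
    refine lip_ext ρ g K ?_ hg0
    intro x hx y hy
    rw [hgG x hx, hgG y hy]
    exact hK hx hy
  have hgd : ∀ x ∈ ball (0:E) ρ, HasFDerivAt g (A x) x := by
    intro x hx
    refine (hGd x).congr_of_eventuallyEq ?_
    filter_upwards [isOpen_ball.mem_nhds hx] with y hy using hgG y (ball_subset_closedBall hy)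
  have hAK : ∀ x ∈ ball (0:E) ρ, ‖A x‖ ≤ K := by
    intro x hx
    rw [← (hgd x hx).fderiv]
    exact norm_fderiv_le_of_lipschitz ℝ hgK
  have hsmall : ∀ t : ℝ, 0 ≤ t → t * K < 1 →
      ∫ x in ball (0:E) ρ, (ContinuousLinearMap.id ℝ E + t • A x).det =
        (volume (ball (0:E) ρ)).toReal := by
    intro t ht htK
    have hb := bij g K hgK t ht htK
    have himg : (fun x => x + t • g x) '' (ball (0:E) ρ) = ball 0 ρ := by
      have hout : ∀ x, ρ ≤ ‖x‖ → x + t • g x = x := fun x hx => by simp [hg0 x hx]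
      ext y
      constructor
      · rintro ⟨x, hx, rfl⟩
        by_contra hy
        have hy' : ρ ≤ ‖x + t • g x‖ := by simpa using hy
        have := hb.1 (hout _ hy')
        simp only at this
        exact hy (by simpa only [this] using hx)
      · intro hy
        obtain ⟨x, rfl⟩ := hb.2 y
        refine ⟨x, ?_, rfl⟩
        by_contra hx
        have hx' : ρ ≤ ‖x‖ := by simpa using hx
        simp only [hout x hx'] at hy
        exact hx hy
    have hcv := integral_image_eq_integral_abs_det_fderiv_smul (volume : Measure E)
      (s := ball (0:E) ρ) (f := fun x => x + t • g x)
      (f' := fun x => ContinuousLinearMap.id ℝ E + t • A x) measurableSet_ball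
      (fun x hx => ((hasFDerivAt_id x).add ((hgd x hx).const_smul t)).hasFDerivWithinAt)
      hb.1.injOn (fun _ => (1:ℝ))
    rw [himg] at hcv
    simp only [integral_const, smul_eq_mul, mul_one, measureReal_restrict_apply_univ] at hcv
    rw [show (volume (ball (0:E) ρ)).toReal = volume.real (ball (0:E) ρ) from rfl, hcv]
    refine setIntegral_congr_fun measurableSet_ball fun x hx => ?_
    exact (abs_of_pos (det_pos (A x) K t (hAK x hx) ht htK)).symm
  -- nodes
  let s : Finset ℝ := (Finset.range (n+1)).image fun i : ℕ => 1 / ((K:ℝ) + 1 + i)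
  have hs : n < s.card := by
    rw [Finset.card_image_of_injective, Finset.card_range]
    · exact Nat.lt_succ_self n
    · intro i j hij
      simp only [one_div, inv_inj] at hij
      exact_mod_cast add_left_cancel hij
  have hs' : ∀ t ∈ s, 0 ≤ t ∧ t * K < 1 := by
    intro t ht
    obtain ⟨i, -, rfl⟩ := Finset.mem_image.1 ht
    have hK0 : (0:ℝ) ≤ K := K.2
    have hi : (0:ℝ) ≤ i := Nat.cast_nonneg i
    refine ⟨by positivity, ?_⟩
    rw [one_div_mul_eq_div, div_lt_one (by positivity)]
    linarith
  have hint : ∀ t : ℝ, IntegrableOn (fun x => (ContinuousLinearMap.id ℝ E + t • A x).det)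
      (ball (0:E) ρ) := by
    intro t
    have hc : Continuous (fun x => (ContinuousLinearMap.id ℝ E + t • A x).det) :=
      ContinuousLinearMap.continuous_det.comp (by fun_prop)
    exact (hc.continuousOn.integrableOn_compact (isCompact_closedBall (0:E) ρ)).mono_set
      ball_subset_closedBall
  have hone : ∫ x in ball (0:E) ρ, (ContinuousLinearMap.id ℝ E + (1:ℝ) • A x).det =
      (volume (ball (0:E) ρ)).toReal := by
    calc _ = ∫ x in ball (0:E) ρ, ∑ t ∈ s, (Lagrange.basis s id t).eval 1 *
          (ContinuousLinearMap.id ℝ E + t • A x).det := by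
          congr 1; ext x; exact det_interp s hs (A x) 1
      _ = ∑ t ∈ s, (Lagrange.basis s id t).eval 1 * (volume (ball (0:E) ρ)).toReal := by
          rw [integral_finsetSum _ fun t _ => (hint t).const_mul _]
          refine Finset.sum_congr rfl fun t ht => ?_
          rw [integral_const_mul, hsmall t (hs' t ht).1 (hs' t ht).2]
      _ = _ := by
          rw [← Finset.sum_mul, ← Polynomial.eval_finsetSum, Lagrange.sum_basis]
          · simp
          · exact fun _ _ _ _ h => h
          · exact Finset.card_pos.1 (by omega)
  have hzero : ∀ x, (ContinuousLinearMap.id ℝ E + (1:ℝ) • A x).det = 0 := by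
    intro x
    have h1 : ContinuousLinearMap.id ℝ E + (1:ℝ) • A x = fderiv ℝ r x := by
      simp [A]
    rw [h1]
    by_contra hdet
    have hunit : IsUnit (LinearMap.det (fderiv ℝ r x : E →ₗ[ℝ] E)) := isUnit_iff_ne_zero.2 hdet
    have hsurj := (LinearMap.equivOfIsUnitDet hunit).surjective
    obtain ⟨v, hv⟩ := hsurj (r x)
    have hv' : fderiv ℝ r x v = r x := by
      rw [← hv, LinearMap.equivOfIsUnitDet_apply]; rfl
    have h2 := (hrd x).inner ℝ (hrd x)
    have h3 : (fun y => (inner ℝ (r y) (r y) : ℝ)) = fun _ => ρ ^ 2 := by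
      ext y; rw [real_inner_self_eq_norm_sq, hn]
    rw [h3] at h2
    have h4 := h2.unique (hasFDerivAt_const _ _)
    have h5 := congrArg (fun φ => φ v) h4
    simp [hv', hn] at h5
    exact hρ.ne' h5
  rw [integral_congr_ae (Filter.Eventually.of_forall hzero)] at hone
  have hvol : 0 < (volume (ball (0:E) ρ)).toReal :=
    ENNReal.toReal_pos (measure_ball_pos _ _ hρ).ne' measure_ball_lt_top.ne
  simp at hone
  simp [← hone] at hvol

/-- A continuous map equal to the identity outside a ball has a zero. -/
lemma exists_zero {n : ℕ} (ρ : ℝ) (hρ : 0 < ρ)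
    (q : EuclideanSpace ℝ (Fin n) → EuclideanSpace ℝ (Fin n)) (hq : Continuous q)
    (hid : ∀ x, ρ ≤ ‖x‖ → q x = x) : ∃ x, q x = 0 := by
  by_contra! hne
  let E := EuclideanSpace ℝ (Fin n)
  let t : E → Set E := fun x => {y | y ∈ ball (q x) ‖q x‖ ∧ (ρ + 1 ≤ ‖x‖ → y = x)}
  have ht : ∀ x, Convex ℝ (t x) := by
    intro x
    by_cases hx : ρ + 1 ≤ ‖x‖
    · have : t x = ball (q x) ‖q x‖ ∩ {x} := by ext y; simp [t, hx]
      rw [this]; exact (convex_ball _ _).inter (convex_singleton _)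
    · have : t x = ball (q x) ‖q x‖ := by ext y; simp [t, hx]
      rw [this]; exact convex_ball _ _
  obtain ⟨p, hp⟩ := exists_contMDiffMap_forall_mem_convex_of_local (n := 1)
    (modelWithCornersSelf ℝ E) (t := t) ht (by
      intro x
      by_cases hx : ρ < ‖x‖
      · refine ⟨{y | ρ < ‖y‖}, (isOpen_lt continuous_const continuous_norm).mem_nhds hx,
          id, contMDiffOn_id, fun y hy => ⟨?_, fun _ => rfl⟩⟩
        simp only [mem_ofPred_eq] at hy
        rw [hid y hy.le]
        exact mem_ball_self (hρ.trans hy)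
      · refine ⟨{y | ‖y‖ < ρ + 1} ∩ {y | dist (q x) (q y) < ‖q y‖}, ?_, fun _ => q x,
          contMDiffOn_const, ?_⟩
        · refine Filter.inter_mem ?_ ?_
          · exact (isOpen_lt continuous_norm continuous_const).mem_nhds (by
              simp only [mem_ofPred_eq]; linarith)
          · exact (isOpen_lt (by fun_prop) (by fun_prop)).mem_nhds (by
              simpa using hne x)
        · rintro y ⟨hy1, hy2⟩
          exact ⟨hy2, fun h => absurd hy1 (not_lt.2 h)⟩)
  have hps : ContDiff ℝ 1 p := p.contMDiff.contDiff
  have hp0 : ∀ x, p x ≠ 0 := by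
    intro x h0
    have := (hp x).1
    rw [h0] at this
    simp at this
  refine no_retract (ρ + 1) (by linarith) (fun x => ((ρ + 1) * ‖p x‖⁻¹) • p x) ?_ ?_ ?_
  · exact (contDiff_const.mul ((hps.norm ℝ hp0).inv fun x => norm_ne_zero_iff.2 (hp0 x))).smul hps
  · intro x
    have := norm_ne_zero_iff.2 (hp0 x)
    rw [norm_smul, norm_mul, norm_inv, norm_norm, Real.norm_of_nonneg (by linarith)]
    field_simp
  · intro x hx
    have h1 : p x = x := (hp x).2 hx.ge
    simp only [h1, hx]
    rw [mul_inv_cancel₀ (by linarith), one_smul]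

end BrouwerAux

theorem stmt_13 (L : ℕ) (h : EuclideanSpace ℝ (Fin L) → EuclideanSpace ℝ (Fin L))
    (hcont : Continuous h) (R : ℝ) (hR : 0 < R)
    (hpos : ∀ v, ‖v‖ = R → 0 ≤ ⟪h v, v⟫) :
    ∃ v : EuclideanSpace ℝ (Fin L), ‖v‖ ≤ R ∧ h v = 0 := by
  let χ : EuclideanSpace ℝ (Fin L) → ℝ := fun x => min 1 (max 0 (‖x‖ / R - 1))
  let π : EuclideanSpace ℝ (Fin L) → EuclideanSpace ℝ (Fin L) := fun x => (R / max R ‖x‖) • x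
  have hm : ∀ x : EuclideanSpace ℝ (Fin L), max R ‖x‖ ≠ 0 := fun x =>
    (hR.trans_le (le_max_left _ _)).ne'
  have hχc : Continuous χ := by fun_prop
  have hπc : Continuous π := by
    have : Continuous fun x : EuclideanSpace ℝ (Fin L) => R / max R ‖x‖ :=
      continuous_const.div (by fun_prop) hm
    exact this.smul continuous_id
  obtain ⟨x, hx⟩ := BrouwerAux.exists_zero (2 * R) (by linarith)
    (fun x => (1 - χ x) • h (π x) + χ x • x) (by fun_prop) (by
      intro x hx
      have : χ x = 1 := by
        apply min_eq_left
        apply le_max_of_le_right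
        have : 2 ≤ ‖x‖ / R := by rwa [le_div_iff₀ hR]
        linarith
      simp [this])
  by_cases hxR : ‖x‖ ≤ R
  · refine ⟨x, hxR, ?_⟩
    have h1 : χ x = 0 := by
      have : ‖x‖ / R ≤ 1 := by rwa [div_le_one hR]
      simp only [χ]
      rw [max_eq_left (by linarith), min_eq_right zero_le_one]
    have h2 : π x = x := by
      simp only [π]
      rw [max_eq_left hxR, div_self hR.ne', one_smul]
    simpa [h1, h2] using hx
  · exfalso
    push Not at hxR
    have hx0 : 0 < ‖x‖ := hR.trans hxR
    have h1 : 0 < χ x := by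
      have : 1 < ‖x‖ / R := by rwa [one_lt_div hR]
      exact lt_min one_pos (lt_max_of_lt_right (by linarith))
    have h1' : χ x ≤ 1 := min_le_left _ _
    have h2 : π x = (R / ‖x‖) • x := by
      simp only [π]
      rw [max_eq_right hxR.le]
    have h3 : ‖π x‖ = R := by
      rw [h2, norm_smul, Real.norm_of_nonneg (by positivity)]
      field_simp
    have h4 := hpos _ h3
    have h5 : 0 ≤ (⟪h (π x), x⟫ : ℝ) := by
      nth_rewrite 2 [h2] at h4
      rw [inner_smul_right] at h4
      exact nonneg_of_mul_nonneg_right h4 (by positivity)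
    have h6 := congrArg (fun z => (⟪z, x⟫ : ℝ)) hx
    simp only [inner_add_left, real_inner_smul_left, inner_zero_left,
      real_inner_self_eq_norm_sq] at h6
    have h7 : 0 ≤ (1 - χ x) * ⟪h (π x), x⟫ := mul_nonneg (by linarith) h5
    have h8 : 0 < χ x * ‖x‖ ^ 2 := by positivity
    linarith
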